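/- arXiv:1505.02377 — 4 statements merged into one kernel-verified Lean document; each statement's English description precedes it below -/
import Mathlib

section
/- Let H, Z ∈ ℝ^{d×d} be real symmetric positive semidefinite matrices, let r̄ = min(rank(H), rank(Z)), and let ξ be a random vector in ℝ^d distributed as the multivariate Gaussian N(0, Z) with mean zero and covariance Z. Then for any γ ≥ 1, Prob( ξᵀ H ξ > γ · E[ξᵀ H ξ] ) ≤ r̄ · exp( −(1/2)(γ − √(2γ − 1)) ). -/
open MeasureTheory ProbabilityTheory Matrix

/-- `ξ` is a centered Gaussian random vector with covariance matrix `Z`: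
every linear functional `⟨a, ξ⟩` is distributed as `N(0, aᵀZa)`. -/
def IsCenteredGaussianVector {Ω : Type*} [MeasureSpace Ω] {d : ℕ}
    (ξ : Ω → (Fin d → ℝ)) (Z : Matrix (Fin d) (Fin d) ℝ) : Prop :=
  Measurable ξ ∧ ∀ a : Fin d → ℝ,
    Measure.map (fun ω => a ⬝ᵥ ξ ω) ℙ = gaussianReal 0 (a ⬝ᵥ Z.mulVec a).toNNReal


lemma aux_scalar (γ : ℝ) (hγ : 1 ≤ γ) :
    Real.sqrt γ * Real.exp ((1 - γ) / 2) ≤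
      Real.exp (-(1 / 2) * (γ - Real.sqrt (2 * γ - 1))) := by
  set s := Real.sqrt (2 * γ - 1) with hs
  have hs2 : s ^ 2 = 2 * γ - 1 := Real.sq_sqrt (by linarith)
  have hs1 : 1 ≤ s := Real.one_le_sqrt.mpr (by linarith)
  have h := Real.quadratic_le_exp_of_nonneg (x := s - 1) (by linarith)
  have h1 : γ ≤ Real.exp ((s - 1) / 2) ^ 2 := by
    rw [← Real.exp_nat_mul]
    have : ((2 : ℕ) : ℝ) * ((s - 1) / 2) = s - 1 := by push_cast; ring
    rw [this]
    nlinarith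
  have h2 : Real.sqrt γ ≤ Real.exp ((s - 1) / 2) :=
    Real.sqrt_le_iff.mpr ⟨(Real.exp_pos _).le, h1⟩
  calc Real.sqrt γ * Real.exp ((1 - γ) / 2)
      ≤ Real.exp ((s - 1) / 2) * Real.exp ((1 - γ) / 2) := by gcongr
    _ = _ := by rw [← Real.exp_add]; congr 1; ring

lemma aux_tail (γ : ℝ) (hγ : 1 ≤ γ) (v : NNReal) :
    gaussianReal 0 v {x | γ * v < x ^ 2} ≤
      ENNReal.ofReal (Real.exp (-(1 / 2) * (γ - Real.sqrt (2 * γ - 1)))) := by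
  refine le_trans ?_ (ENNReal.ofReal_le_ofReal (aux_scalar γ hγ))
  have hm : MeasurableSet {x : ℝ | γ * v < x ^ 2} :=
    measurableSet_lt measurable_const (by fun_prop)
  by_cases hv : v = 0
  · subst hv
    simp
  have hvp : (0 : ℝ) < v := by positivity
  set w : NNReal := Real.toNNReal γ * v with hw
  have hwγ : (w : ℝ) = γ * v := by
    rw [hw, NNReal.coe_mul, Real.coe_toNNReal _ (by linarith)]
  have hw0 : w ≠ 0 := by
    intro h
    have : (w : ℝ) = 0 := by rw [h]; simp
    rw [hwγ] at this
    nlinarith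
  set C := Real.sqrt γ * Real.exp ((1 - γ) / 2) with hC
  have hC0 : 0 ≤ C := by positivity
  rw [gaussianReal_apply 0 hv]
  calc ∫⁻ x in {x : ℝ | γ * v < x ^ 2}, gaussianPDF 0 v x
      ≤ ∫⁻ x in {x : ℝ | γ * v < x ^ 2}, ENNReal.ofReal C * gaussianPDF 0 w x := by
        refine setLIntegral_mono' hm fun x hx => ?_
        simp only [Set.mem_ofPred_eq] at hx
        rw [gaussianPDF, gaussianPDF, ← ENNReal.ofReal_mul hC0]
        apply ENNReal.ofReal_le_ofReal
        simp only [gaussianPDFReal, hwγ, sub_zero]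
        have e1 : Real.sqrt (2 * Real.pi * (γ * v)) = Real.sqrt γ * Real.sqrt (2 * Real.pi * v) := by
          rw [← Real.sqrt_mul (by linarith)]; congr 1; ring
        have hsg : Real.sqrt γ ≠ 0 := (Real.sqrt_pos.mpr (by linarith)).ne'
        have e2 : C * ((Real.sqrt (2 * Real.pi * (γ * v)))⁻¹ * Real.exp (-x ^ 2 / (2 * (γ * v))))
          = (Real.sqrt (2 * Real.pi * v))⁻¹ *
            Real.exp ((1 - γ) / 2 + -x ^ 2 / (2 * (γ * v))) := by
          rw [e1, hC, Real.exp_add, mul_inv]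
          field_simp
        rw [e2]
        gcongr
        have hg : 0 < γ := by linarith
        have e3 : (1 - γ) / 2 + -x ^ 2 / (2 * (γ * v)) - (-x ^ 2 / (2 * v))
          = (γ - 1) * (x ^ 2 - γ * v) / (2 * (γ * v)) := by
          field_simp
          ring
        have : 0 ≤ (γ - 1) * (x ^ 2 - γ * v) / (2 * (γ * v)) := by
          apply div_nonneg
          · exact mul_nonneg (by linarith) (by linarith)
          · positivity
        linarith
    _ ≤ ∫⁻ x, ENNReal.ofReal C * gaussianPDF 0 w x := setLIntegral_le_lintegral _ _
    _ = ENNReal.ofReal C := by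
        rw [lintegral_const_mul _ (measurable_gaussianPDF _ _),
          lintegral_gaussianPDF_eq_one 0 hw0, mul_one]

lemma aux_spectral {d : ℕ} (H : Matrix (Fin d) (Fin d) ℝ) (hH : H.PosSemidef) :
    ∃ (S : Finset (Fin d)) (a : Fin d → Fin d → ℝ), S.card = H.rank ∧
      ∀ x : Fin d → ℝ, x ⬝ᵥ H.mulVec x = ∑ i ∈ S, (a i ⬝ᵥ x) ^ 2 := by
  classical
  set hA := hH.isHermitian
  set U : Matrix (Fin d) (Fin d) ℝ := (hA.eigenvectorUnitary).1 with hU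
  have hsp : H = U * diagonal hA.eigenvalues * Uᵀ := by
    have := hA.spectral_theorem
    rw [Unitary.conjStarAlgAut_apply] at this
    exact this
  refine ⟨Finset.univ.filter fun i => hA.eigenvalues i ≠ 0,
    fun i => Real.sqrt (hA.eigenvalues i) • Uᵀ i, ?_, ?_⟩
  · rw [hA.rank_eq_card_non_zero_eigs, Fintype.card_subtype]
  intro x
  have h1 : x ⬝ᵥ H.mulVec x = ∑ i, hA.eigenvalues i * (Uᵀ i ⬝ᵥ x) ^ 2 := by
    conv_lhs => rw [hsp]
    rw [← mulVec_mulVec, ← mulVec_mulVec, dotProduct_mulVec, ← mulVec_transpose]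
    simp only [dotProduct, mulVec_diagonal]
    refine Finset.sum_congr rfl fun i _ => ?_
    simp only [mulVec, dotProduct]
    ring
  rw [h1, Finset.sum_filter]
  refine Finset.sum_congr rfl fun i _ => ?_
  split_ifs with h
  · rw [smul_dotProduct, smul_eq_mul, mul_pow, Real.sq_sqrt (hH.eigenvalues_nonneg i)]
  · push Not at h
    rw [h, zero_mul]

lemma aux_rankH {Ω : Type*} [MeasureSpace Ω]
    [IsProbabilityMeasure (ℙ : Measure Ω)] {d : ℕ}
    (H Z : Matrix (Fin d) (Fin d) ℝ) (hH : H.PosSemidef) (hZ : Z.PosSemidef)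
    (ξ : Ω → (Fin d → ℝ)) (hξ : IsCenteredGaussianVector ξ Z)
    (γ : ℝ) (hγ : 1 ≤ γ) :
    ℙ {ω | ξ ω ⬝ᵥ H.mulVec (ξ ω) > γ * ∫ ω, ξ ω ⬝ᵥ H.mulVec (ξ ω) ∂ℙ} ≤
      ENNReal.ofReal ((H.rank : ℝ) *
        Real.exp (-(1 / 2) * (γ - Real.sqrt (2 * γ - 1)))) := by
  obtain ⟨S, a, hS, ha⟩ := aux_spectral H hH
  obtain ⟨hm, hg⟩ := hξ
  simp only [ha]
  have hmeas : ∀ b : Fin d → ℝ, Measurable fun ω => b ⬝ᵥ ξ ω := by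
    intro b
    simp only [dotProduct]
    fun_prop
  set v : Fin d → NNReal := fun i => (a i ⬝ᵥ Z.mulVec (a i)).toNNReal with hv
  have hint : ∀ i, Integrable (fun ω => (a i ⬝ᵥ ξ ω) ^ 2) ℙ := by
    intro i
    have h1 : Integrable (fun x : ℝ => x ^ 2) (Measure.map (fun ω => a i ⬝ᵥ ξ ω) ℙ) := by
      rw [hg]
      exact (memLp_id_gaussianReal 2).integrable_sq
    exact h1.comp_measurable (hmeas _)
  have hval : ∀ i, ∫ ω, (a i ⬝ᵥ ξ ω) ^ 2 = v i := by
    intro i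
    have h1 : ∫ x, x ^ 2 ∂(Measure.map (fun ω => a i ⬝ᵥ ξ ω) ℙ) = ∫ ω, (a i ⬝ᵥ ξ ω) ^ 2 :=
      integral_map (hmeas _).aemeasurable (by fun_prop)
    rw [← h1, hg]
    have h2 := variance_fun_id_gaussianReal (μ := 0) (v := v i)
    rw [variance_of_integral_eq_zero (by fun_prop) (by simp)] at h2
    exact h2
  rw [integral_finsetSum _ fun i _ => hint i]
  simp only [hval]
  calc ℙ {ω | ∑ i ∈ S, (a i ⬝ᵥ ξ ω) ^ 2 > γ * ∑ i ∈ S, (v i : ℝ)}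
      ≤ ℙ (⋃ i ∈ S, {ω | γ * v i < (a i ⬝ᵥ ξ ω) ^ 2}) := by
        apply measure_mono
        intro ω hω
        simp only [Set.mem_ofPred_eq, Finset.mul_sum] at hω
        obtain ⟨i, hi, hlt⟩ := Finset.exists_lt_of_sum_lt hω
        simp only [Set.mem_iUnion]
        exact ⟨i, hi, hlt⟩
    _ ≤ ∑ i ∈ S, ℙ {ω | γ * v i < (a i ⬝ᵥ ξ ω) ^ 2} := measure_biUnion_finset_le _ _
    _ ≤ ∑ i ∈ S, ENNReal.ofReal (Real.exp (-(1 / 2) * (γ - Real.sqrt (2 * γ - 1)))) := by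
        refine Finset.sum_le_sum fun i _ => ?_
        have hms : MeasurableSet {x : ℝ | γ * v i < x ^ 2} :=
          measurableSet_lt measurable_const (by fun_prop)
        refine le_trans (le_of_eq ?_) (aux_tail γ hγ (v i))
        rw [← hg, Measure.map_apply (hmeas _) hms]
        rfl
    _ = _ := by
        rw [Finset.sum_const, hS, ENNReal.ofReal_mul (by positivity), nsmul_eq_mul,
          ENNReal.ofReal_natCast]

lemma aux_proj {d : ℕ} (Z : Matrix (Fin d) (Fin d) ℝ) :
    ∃ P : Matrix (Fin d) (Fin d) ℝ, P.rank ≤ Z.rank ∧ P * Z = Z := by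
  classical
  set p := LinearMap.range (Matrix.toLin' Z) with hp
  obtain ⟨g, hg⟩ := LinearMap.exists_leftInverse_of_injective p.subtype p.ker_subtype
  refine ⟨LinearMap.toMatrix' (p.subtype ∘ₗ g), ?_, ?_⟩
  · have e : Z.rank = Module.finrank ℝ p := by
      rw [Matrix.rank, hp, Matrix.toLin'_apply']
    rw [e, Matrix.rank, ← Matrix.toLin'_apply', Matrix.toLin'_toMatrix']
    apply Submodule.finrank_mono
    rintro _ ⟨x, rfl⟩
    simp
  · apply (Matrix.toLin' (R := ℝ) (m := Fin d) (n := Fin d)).injective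
    rw [Matrix.toLin'_mul, Matrix.toLin'_toMatrix']
    refine LinearMap.ext fun x => ?_
    have h := LinearMap.congr_fun hg ⟨Matrix.toLin' Z x, LinearMap.mem_range_self _ x⟩
    exact congrArg Subtype.val h

/-- Right-side exponential tail bound for Gaussian quadratic forms: for PSD
`H, Z`, `ξ ~ N(0, Z)`, `r̄ = min(rank H, rank Z)` and `γ ≥ 1`,
`P(ξᵀHξ > γ·E[ξᵀHξ]) ≤ r̄ · exp(−(γ − √(2γ − 1))/2)`. -/
theorem gaussian_quadForm_upper_tail {Ω : Type*} [MeasureSpace Ω]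
    [IsProbabilityMeasure (ℙ : Measure Ω)] {d : ℕ}
    (H Z : Matrix (Fin d) (Fin d) ℝ) (hH : H.PosSemidef) (hZ : Z.PosSemidef)
    (ξ : Ω → (Fin d → ℝ)) (hξ : IsCenteredGaussianVector ξ Z)
    (γ : ℝ) (hγ : 1 ≤ γ) :
    ℙ {ω | ξ ω ⬝ᵥ H.mulVec (ξ ω) > γ * ∫ ω, ξ ω ⬝ᵥ H.mulVec (ξ ω) ∂ℙ} ≤
      ENNReal.ofReal ((min H.rank Z.rank : ℝ) *
        Real.exp (-(1 / 2) * (γ - Real.sqrt (2 * γ - 1)))) := by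
  rcases le_total (H.rank : ℝ) (Z.rank : ℝ) with h | h
  · rw [min_eq_left h]
    exact aux_rankH H Z hH hZ ξ hξ γ hγ
  rw [min_eq_right h]
  obtain ⟨P, hPr, hPZ⟩ := aux_proj Z
  have hH' : (Pᵀ * H * P).PosSemidef := by
    have := hH.conjTranspose_mul_mul_same P
    rwa [conjTranspose_eq_transpose_of_trivial] at this
  have hr : (Pᵀ * H * P).rank ≤ Z.rank := (rank_mul_le_right _ _).trans hPr
  have hae : ∀ᵐ ω ∂(ℙ : Measure Ω), P.mulVec (ξ ω) = ξ ω := by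
    have hi : ∀ i : Fin d, ∀ᵐ ω ∂(ℙ : Measure Ω), (P - 1) i ⬝ᵥ ξ ω = 0 := by
      intro i
      have hmeas : Measurable fun ω => (P - 1) i ⬝ᵥ ξ ω := by
        have := hξ.1
        simp only [dotProduct]
        fun_prop
      have h1 := hξ.2 ((P - 1) i)
      have h2 : (P - 1) i ⬝ᵥ Z.mulVec ((P - 1) i) = 0 := by
        have h3 : (P - 1) i ᵥ* Z = 0 := by
          have h4 : (P - 1) * Z = 0 := by rw [sub_mul, hPZ, one_mul, sub_self]
          exact congrFun h4 i
        rw [dotProduct_mulVec, h3, zero_dotProduct]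
      rw [h2, Real.toNNReal_zero, gaussianReal_zero_var] at h1
      have h5 : ∀ᵐ x ∂(Measure.map (fun ω => (P - 1) i ⬝ᵥ ξ ω) ℙ), x = 0 := by
        rw [h1, ae_dirac_eq]
        rfl
      exact ae_of_ae_map hmeas.aemeasurable h5
    filter_upwards [ae_all_iff.mpr hi] with ω hω
    ext i
    have := hω i
    change ((P - 1) *ᵥ ξ ω) i = 0 at this
    rw [sub_mulVec, one_mulVec, Pi.sub_apply] at this
    linarith
  have hq : (fun ω => ξ ω ⬝ᵥ H.mulVec (ξ ω)) =ᵐ[ℙ]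
      fun ω => ξ ω ⬝ᵥ (Pᵀ * H * P).mulVec (ξ ω) := by
    filter_upwards [hae] with ω hω
    rw [← mulVec_mulVec, ← mulVec_mulVec, hω, dotProduct_mulVec _ Pᵀ, vecMul_transpose, hω]
  have key := aux_rankH (Pᵀ * H * P) Z hH' hZ ξ hξ γ hγ
  rw [integral_congr_ae hq]
  refine le_trans (le_of_eq ?_) (key.trans (ENNReal.ofReal_le_ofReal ?_))
  · apply measure_congr
    filter_upwards [hq] with ω hω
    apply propext
    change (ξ ω ⬝ᵥ H.mulVec (ξ ω) > _) ↔ (_ > _)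
    rw [hω]
  · gcongr
end

section
/- Let u be a standard normal random variable (mean 0, variance 1). Then for any γ ≥ 1, Prob( u² ≥ γ ) ≤ exp( −(1/2)(γ − √(2γ − 1)) ). -/
open MeasureTheory ProbabilityTheory

lemma pdf_compare (γ x : ℝ) (hγ : 1 ≤ γ) (hx : γ ≤ x ^ 2) :
    gaussianPDFReal 0 1 x ≤
      Real.exp (-(1 / 2) * (γ - Real.sqrt (2 * γ - 1))) *
        gaussianPDFReal 0 (Real.toNNReal γ) x := by
  have h0 : 0 < γ := by linarith
  have hsq : Real.sqrt γ ≤ Real.exp ((Real.sqrt (2 * γ - 1) - 1) / 2) := by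
    have hs1 : 1 ≤ Real.sqrt (2 * γ - 1) := Real.one_le_sqrt.2 (by linarith)
    have hs2 : Real.sqrt (2 * γ - 1) ^ 2 = 2 * γ - 1 := Real.sq_sqrt (by linarith)
    have := Real.quadratic_le_exp_of_nonneg (sub_nonneg.2 hs1)
    apply Real.sqrt_le_iff.2 ⟨(Real.exp_pos _).le, ?_⟩
    rw [← Real.exp_nat_mul]
    have e : ((2 : ℕ) : ℝ) * ((Real.sqrt (2 * γ - 1) - 1) / 2) = Real.sqrt (2 * γ - 1) - 1 := by
      push_cast; ring
    rw [e]
    nlinarith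
  have hexp : Real.exp (-x ^ 2 / 2) ≤ Real.exp (-(γ - 1) / 2) * Real.exp (-x ^ 2 / (2 * γ)) := by
    rw [← Real.exp_add, Real.exp_le_exp]
    have : 0 ≤ (x ^ 2 - γ) * (γ - 1) / (2 * γ) :=
      div_nonneg (mul_nonneg (by linarith) (by linarith)) (by linarith)
    have e : (x ^ 2 - γ) * (γ - 1) / (2 * γ) =
      (-(γ - 1) / 2 + -x ^ 2 / (2 * γ)) - (-x ^ 2 / 2) := by field_simp; ring
    linarith
  have hsplit : Real.exp (-(1 / 2) * (γ - Real.sqrt (2 * γ - 1))) =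
      Real.exp ((Real.sqrt (2 * γ - 1) - 1) / 2) * Real.exp (-(γ - 1) / 2) := by
    rw [← Real.exp_add]; congr 1; ring
  have hsγ : 0 < Real.sqrt γ := Real.sqrt_pos.2 h0
  have hp : 0 < Real.sqrt (2 * Real.pi) := Real.sqrt_pos.2 (by positivity)
  simp only [gaussianPDFReal_def, Real.coe_toNNReal γ h0.le, NNReal.coe_one, mul_one, sub_zero]
  rw [hsplit, Real.sqrt_mul (by positivity) γ, mul_inv]
  calc _ ≤ (Real.sqrt (2 * Real.pi))⁻¹ *
        (Real.exp (-(γ - 1) / 2) * Real.exp (-x ^ 2 / (2 * γ))) := by gcongr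
    _ = Real.sqrt γ * Real.exp (-(γ - 1) / 2) * ((Real.sqrt (2 * Real.pi))⁻¹ * (Real.sqrt γ)⁻¹ *
        Real.exp (-x ^ 2 / (2 * γ))) := by field_simp
    _ ≤ _ := by gcongr

/-- Tail bound for the square of a standard normal random variable:
for `γ ≥ 1`, `P(u² ≥ γ) ≤ exp(−(γ − √(2γ − 1))/2)`. -/
theorem sq_gaussian_tail_bound {Ω : Type*} [MeasureSpace Ω]
    [IsProbabilityMeasure (ℙ : Measure Ω)] (u : Ω → ℝ) (hu : Measurable u)
    (hgauss : Measure.map u ℙ = gaussianReal 0 1)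
    (γ : ℝ) (hγ : 1 ≤ γ) :
    ℙ {ω | u ω ^ 2 ≥ γ} ≤
      ENNReal.ofReal (Real.exp (-(1 / 2) * (γ - Real.sqrt (2 * γ - 1)))) := by
  have hm : MeasurableSet {x : ℝ | γ ≤ x ^ 2} :=
    measurableSet_le measurable_const (by fun_prop)
  have h1 : ℙ {ω | u ω ^ 2 ≥ γ} = gaussianReal 0 1 {x : ℝ | γ ≤ x ^ 2} := by
    rw [← hgauss, Measure.map_apply hu hm]; rfl
  have hv : Real.toNNReal γ ≠ 0 := by
    simp only [ne_eq, Real.toNNReal_eq_zero, not_le]; linarith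
  rw [h1, gaussianReal_apply 0 one_ne_zero]
  set C := Real.exp (-(1 / 2) * (γ - Real.sqrt (2 * γ - 1)))
  calc _ ≤ ∫⁻ x in {x : ℝ | γ ≤ x ^ 2},
        ENNReal.ofReal C * gaussianPDF 0 (Real.toNNReal γ) x := by
        refine setLIntegral_mono' hm fun x hx => ?_
        rw [gaussianPDF, gaussianPDF, ← ENNReal.ofReal_mul (Real.exp_pos _).le]
        exact ENNReal.ofReal_le_ofReal (pdf_compare γ x hγ hx)
    _ ≤ ∫⁻ x, ENNReal.ofReal C * gaussianPDF 0 (Real.toNNReal γ) x :=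
        setLIntegral_le_lintegral _ _
    _ = ENNReal.ofReal C := by
        rw [lintegral_const_mul _ (measurable_gaussianPDF _ _),
          lintegral_gaussianPDF_eq_one 0 hv, mul_one]
end

section
/- Let u_1, …, u_r be independent standard normal random variables and let λ̄_1, …, λ̄_r be nonnegative reals with Σ_{i=1}^r λ̄_i = 1. Then for any γ ≥ 1, Prob( Σ_{i=1}^r λ̄_i u_i² > γ ) ≤ r · exp( −(1/2)(γ − √(2γ − 1)) ). -/
open MeasureTheory ProbabilityTheory

lemma gauss_exp_sq (γ : ℝ) (hγ : 1 ≤ γ) :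
    Integrable (fun x : ℝ => Real.exp ((1 / 2 - 1 / (2 * γ)) * x ^ 2)) (gaussianReal 0 1) ∧
    ∫ x, Real.exp ((1 / 2 - 1 / (2 * γ)) * x ^ 2) ∂(gaussianReal 0 1) = Real.sqrt γ := by
  have hγ0 : 0 < γ := by linarith
  have key : ∀ x : ℝ, gaussianPDFReal 0 1 x * Real.exp ((1 / 2 - 1 / (2 * γ)) * x ^ 2)
      = (Real.sqrt (2 * Real.pi))⁻¹ * Real.exp (-(1 / (2 * γ)) * x ^ 2) := by
    intro x
    simp only [gaussianPDFReal, NNReal.coe_one, mul_one, sub_zero]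
    rw [mul_assoc, ← Real.exp_add]
    congr 2
    ring
  constructor
  · rw [gaussianReal_of_var_ne_zero 0 one_ne_zero,
      integrable_withDensity_iff_integrable_smul' (measurable_gaussianPDF 0 1)
        (Filter.Eventually.of_forall fun x => ENNReal.ofReal_lt_top)]
    simp only [toReal_gaussianPDF, smul_eq_mul, key]
    exact (integrable_exp_neg_mul_sq (by positivity)).const_mul _
  · rw [integral_gaussianReal_eq_integral_smul one_ne_zero]
    simp only [smul_eq_mul, key]
    rw [integral_const_mul, integral_gaussian]
    have : Real.pi / (1 / (2 * γ)) = (2 * Real.pi) * γ := by field_simp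
    rw [this, Real.sqrt_mul (show (0:ℝ) ≤ 2 * Real.pi by positivity) γ, ← mul_assoc, inv_mul_cancel₀ (by positivity), one_mul]

lemma sqrt_exp_bound (γ : ℝ) (hγ : 1 ≤ γ) :
    Real.sqrt γ ≤ Real.exp ((1 / 2 - 1 / (2 * γ)) * γ) *
      Real.exp (-(1 / 2) * (γ - Real.sqrt (2 * γ - 1))) := by
  have hγ0 : 0 < γ := by linarith
  set s := Real.sqrt (2 * γ - 1) with hs
  have hs2 : s ^ 2 = 2 * γ - 1 := Real.sq_sqrt (by linarith)
  have hs1 : 1 ≤ s := by rw [hs]; exact Real.one_le_sqrt.mpr (by linarith)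
  rw [← Real.exp_add]
  have : (1 / 2 - 1 / (2 * γ)) * γ + -(1 / 2) * (γ - s) = (s - 1) / 2 := by field_simp; ring
  rw [this]
  apply Real.sqrt_le_iff.mpr ⟨by positivity, ?_⟩
  rw [← Real.exp_nat_mul]
  have h := Real.quadratic_le_exp_of_nonneg (x := s - 1) (by linarith)
  have e : ((2 : ℕ) : ℝ) * ((s - 1) / 2) = s - 1 := by push_cast; ring
  rw [e]
  nlinarith

/-- Tail bound for a convex combination of squares of independent standard
normal variables: if `λ̄ᵢ ≥ 0` sum to `1`, then for `γ ≥ 1`,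
`P(Σ λ̄ᵢ uᵢ² > γ) ≤ r · exp(−(γ − √(2γ − 1))/2)`. -/
theorem convex_combination_chiSq_tail_bound {Ω : Type*} [MeasureSpace Ω]
    [IsProbabilityMeasure (ℙ : Measure Ω)] {r : ℕ}
    (u : Fin r → Ω → ℝ) (hu : ∀ i, Measurable (u i))
    (hindep : iIndepFun u ℙ)
    (hgauss : ∀ i, Measure.map (u i) ℙ = gaussianReal 0 1)
    (lam : Fin r → ℝ) (hlam : ∀ i, 0 ≤ lam i) (hsum : ∑ i, lam i = 1)
    (γ : ℝ) (hγ : 1 ≤ γ) :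
    ℙ {ω | ∑ i, lam i * u i ω ^ 2 > γ} ≤
      ENNReal.ofReal ((r : ℝ) * Real.exp (-(1 / 2) * (γ - Real.sqrt (2 * γ - 1)))) := by
  have hγ0 : 0 < γ := by linarith
  obtain ⟨hI, hE⟩ := gauss_exp_sq γ hγ
  have hB := sqrt_exp_bound γ hγ
  set t : ℝ := 1 / 2 - 1 / (2 * γ) with ht
  have ht0 : 0 ≤ t := by
    have : 1 / (2 * γ) ≤ 1 / 2 := by
      apply one_div_le_one_div_of_le <;> linarith
    linarith
  set B := Real.exp (-(1 / 2) * (γ - Real.sqrt (2 * γ - 1))) with hBdef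
  have hint : ∀ i, Integrable (fun ω => Real.exp (t * u i ω ^ 2)) (ℙ : Measure Ω) := by
    intro i
    rw [← hgauss i] at hI
    exact hI.comp_measurable (hu i)
  have hval : ∀ i, ∫ ω, Real.exp (t * u i ω ^ 2) ∂(ℙ : Measure Ω) = Real.sqrt γ := by
    intro i
    rw [← hE, ← hgauss i, integral_map (hu i).aemeasurable (by fun_prop)]
  have hM := mul_meas_ge_le_integral_of_nonneg (μ := (ℙ : Measure Ω))
    (f := fun ω => ∑ i, lam i * Real.exp (t * u i ω ^ 2))
    (Filter.Eventually.of_forall fun ω =>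
      Finset.sum_nonneg fun i _ => mul_nonneg (hlam i) (Real.exp_pos _).le)
    (integrable_finsetSum _ fun i _ => (hint i).const_mul _) (Real.exp (t * γ))
  rw [integral_finsetSum _ fun i _ => (hint i).const_mul _] at hM
  simp only [integral_const_mul, hval] at hM
  rw [← Finset.sum_mul, hsum, one_mul] at hM
  have hr : (1 : ℝ) ≤ r := by
    have : r ≠ 0 := by
      rintro rfl
      simp at hsum
    exact_mod_cast Nat.one_le_iff_ne_zero.mpr this
  have hsub : {ω | ∑ i, lam i * u i ω ^ 2 > γ} ⊆
      {ω | Real.exp (t * γ) ≤ ∑ i, lam i * Real.exp (t * u i ω ^ 2)} := by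
    intro ω hω
    have hω' : γ < ∑ i, lam i * u i ω ^ 2 := hω
    have hj := convexOn_exp.map_sum_le (t := Finset.univ) (w := lam)
      (p := fun i => t * u i ω ^ 2) (fun i _ => hlam i) hsum (fun i _ => Set.mem_univ _)
    simp only [smul_eq_mul] at hj
    refine le_trans (Real.exp_le_exp.mpr ?_) hj
    calc t * γ ≤ t * ∑ i, lam i * u i ω ^ 2 := mul_le_mul_of_nonneg_left hω'.le ht0
      _ = _ := by rw [Finset.mul_sum]; exact Finset.sum_congr rfl fun i _ => by ring
  refine (measure_mono hsub).trans ?_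
  rw [← ofReal_measureReal]
  apply ENNReal.ofReal_le_ofReal
  have h1 := le_of_mul_le_mul_left (hM.trans hB) (Real.exp_pos _)
  have hB0 : 0 < B := Real.exp_pos _
  nlinarith
end

section
/- Let M and M' be d×d real symmetric positive definite matrices, each with condition number at most K (K ≥ 1) and trace at most R (R > 0), and let x_i, x_j ∈ ℝ^d with ‖x_i‖₂ ≤ Γ and ‖x_j‖₂ ≤ Γ. Then | (x_i − x_j)ᵀ M (x_i − x_j) − (x_i − x_j)ᵀ M' (x_i − x_j) | ≤ 4 (K + 1) R Γ² / d. -/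
open Matrix

lemma quad_le {d : ℕ} (M : Matrix (Fin d) (Fin d) ℝ) (hM : M.IsHermitian) (L : ℝ)
    (hL : ∀ i, hM.eigenvalues i ≤ L) (z : EuclideanSpace ℝ (Fin d)) :
    z.ofLp ⬝ᵥ M.mulVec z.ofLp ≤ L * ‖z‖ ^ 2 := by
  have hb := hM.eigenvectorBasis.sum_inner_mul_inner z (WithLp.toLp 2 (M.mulVec z.ofLp))
  have h2 := hM.eigenvectorBasis.sum_inner_mul_inner z z
  rw [real_inner_self_eq_norm_sq] at h2
  have h0 : inner ℝ z (WithLp.toLp 2 (M.mulVec z.ofLp)) = z.ofLp ⬝ᵥ M.mulVec z.ofLp := by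
    simp [EuclideanSpace.inner_eq_star_dotProduct, dotProduct_comm]
  rw [← h0, ← hb, ← h2, Finset.mul_sum]
  refine Finset.sum_le_sum fun i _ => ?_
  have h3 : inner ℝ (hM.eigenvectorBasis i) (WithLp.toLp 2 (M.mulVec z.ofLp))
      = hM.eigenvalues i * inner ℝ (hM.eigenvectorBasis i) z := by
    have hs : Mᵀ = M := by simpa [IsHermitian, conjTranspose_eq_transpose_of_trivial] using hM
    simp only [EuclideanSpace.inner_eq_star_dotProduct, star_trivial]
    rw [dotProduct_comm, dotProduct_mulVec, ← mulVec_transpose, hs, hM.mulVec_eigenvectorBasis,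
      smul_dotProduct, dotProduct_comm, smul_eq_mul]
  rw [h3, real_inner_comm z]
  nlinarith [hL i, mul_self_nonneg (inner ℝ z (hM.eigenvectorBasis i)),
    mul_le_mul_of_nonneg_right (hL i) (mul_self_nonneg (inner ℝ z (hM.eigenvectorBasis i)))]

lemma quad_bound {d : ℕ} (hd : 0 < d)
    (M : Matrix (Fin d) (Fin d) ℝ) (hM : M.PosDef)
    (K R : ℝ) (hK : 1 ≤ K)
    (hcond : (⨆ i, hM.1.eigenvalues i) / (⨅ i, hM.1.eigenvalues i) ≤ K)
    (htr : M.trace ≤ R) (z : EuclideanSpace ℝ (Fin d)) :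
    0 ≤ z.ofLp ⬝ᵥ M.mulVec z.ofLp ∧ z.ofLp ⬝ᵥ M.mulVec z.ofLp ≤ K * R / d * ‖z‖ ^ 2 := by
  haveI : Nonempty (Fin d) := ⟨⟨0, hd⟩⟩
  have hd' : (0 : ℝ) < d := by exact_mod_cast hd
  refine ⟨by simpa using hM.posSemidef.dotProduct_mulVec_nonneg z.ofLp, ?_⟩
  refine quad_le M hM.1 _ (fun i => ?_) z
  obtain ⟨j, hj⟩ := exists_eq_ciInf_of_finite (f := hM.1.eigenvalues)
  have hpos : 0 < ⨅ i, hM.1.eigenvalues i := hj ▸ hM.eigenvalues_pos j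
  rw [div_le_iff₀ hpos] at hcond
  have h1 := le_ciSup (Set.finite_range hM.1.eigenvalues).bddAbove i
  have h2 : (d : ℝ) * (⨅ i, hM.1.eigenvalues i) ≤ R := by
    refine le_trans ?_ htr
    rw [hM.1.trace_eq_sum_eigenvalues]
    have := Finset.card_nsmul_le_sum Finset.univ hM.1.eigenvalues (⨅ i, hM.1.eigenvalues i)
      (fun i _ => ciInf_le (Set.finite_range hM.1.eigenvalues).bddBelow i)
    simpa using this
  rw [le_div_iff₀ hd']
  nlinarith [mul_le_mul_of_nonneg_left h2 (by linarith : 0 ≤ K),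
    mul_le_mul_of_nonneg_right (h1.trans hcond) hd'.le]


/-- Uniform-Replace-One stability of BDML: if `M` and `M'` are symmetric
positive definite with condition number at most `K` and trace at most `R`, and
`‖xᵢ‖₂, ‖xⱼ‖₂ ≤ Γ`, then the losses differ by at most `4(K+1)RΓ²/d`. -/
theorem bdml_stability_bound {d : ℕ} (hd : 0 < d)
    (M M' : Matrix (Fin d) (Fin d) ℝ) (hM : M.PosDef) (hM' : M'.PosDef)
    (K R Γ : ℝ) (hK : 1 ≤ K) (hR : 0 < R)
    (hcond : (⨆ i, hM.1.eigenvalues i) / (⨅ i, hM.1.eigenvalues i) ≤ K)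
    (hcond' : (⨆ i, hM'.1.eigenvalues i) / (⨅ i, hM'.1.eigenvalues i) ≤ K)
    (htr : M.trace ≤ R) (htr' : M'.trace ≤ R)
    (x y : EuclideanSpace ℝ (Fin d)) (hx : ‖x‖ ≤ Γ) (hy : ‖y‖ ≤ Γ) :
    |(fun i => x i - y i) ⬝ᵥ M.mulVec (fun i => x i - y i) -
      (fun i => x i - y i) ⬝ᵥ M'.mulVec (fun i => x i - y i)| ≤
      4 * (K + 1) * R * Γ ^ 2 / d := by
  have hd' : (0 : ℝ) < d := by exact_mod_cast hd
  have h := quad_bound hd M hM K R hK hcond htr (x - y)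
  have h' := quad_bound hd M' hM' K R hK hcond' htr' (x - y)
  have e : (x - y).ofLp = fun i => x i - y i := rfl
  rw [e] at h h'
  have hn : ‖x - y‖ ^ 2 ≤ 4 * Γ ^ 2 := by
    have := norm_sub_le x y
    have h0 := norm_nonneg (x - y)
    nlinarith
  have hc : K * R / d * ‖x - y‖ ^ 2 ≤ 4 * (K + 1) * R * Γ ^ 2 / d := by
    calc K * R / d * ‖x - y‖ ^ 2 ≤ (K + 1) * R / d * (4 * Γ ^ 2) := by
          gcongr
          linarith
      _ = _ := by ring
  rw [abs_le]
  constructor <;> linarith [h.1, h.2, h'.1, h'.2]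
end
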